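/- Suppose 1/s₁ + 1/s₂ < 1. Then as a → 0⁺ the measures μ_a converge *-weakly to μ_0, the acim of the limit map W_0; that is, for every continuous g : [0,1] → ℝ, ∫ g dμ_a → ∫ g dμ_0 as a → 0⁺. -/

import Mathlib

open MeasureTheory Filter Topology

/-- The W-like map `W_a` with parameters `s₁ s₂ p q r` and perturbation `a`. -/
noncomputable def Wmap (s₁ s₂ p q r a : ℝ) (x : ℝ) : ℝ :=
  if x < 1/2 - (1/2 + r*a)/(s₁ + p*a) then
    1 - (2*(s₁ + p*a)/(s₁ - 1 + p*a - 2*r*a)) * x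
  else if x < 1/2 then
    (s₁ + p*a)*(x - 1/2) + 1/2 + r*a
  else if x < 1/2 + (1/2 + r*a)/(s₂ + q*a) then
    -(s₂ + q*a)*(x - 1/2) + 1/2 + r*a
  else
    1 + (2*(s₂ + q*a)/(s₂ - 1 + q*a - 2*r*a)) * (x - 1)

/-- The invariant density of the unperturbed Markov map `W₀`. -/
noncomputable def h0 (s₁ s₂ : ℝ) (x : ℝ) : ℝ :=
  if x < 1/2 then 2*s₁*(s₂+1)/(2*s₁*s₂+s₁-s₂) else 2*s₂*(s₁-1)/(2*s₁*s₂+s₁-s₂)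

/-!
Instead of densities and their variation, the argument tracks the interval integrals of a test
function: if `|∫_u^v f| ≤ A + B (v - u)` for all `u ≤ v`, then `f ∘ W` satisfies the same kind of
bound with `θ A` in place of `A` and a slightly larger `B`. Near the turning point at height close
to `1/2` both inner branches contribute, and there `θ < 1` is exactly `1/s₁ + 1/s₂ < 1`. Iterating,
and using that an absolutely continuous measure sees only averages of fast oscillations, one gets
`|∫ f dν| ≤ C sup |∫_u^v f|` for every acim `ν` of every nearby map, with a common constant `C`.

For the limit map `W₀` the identities for the integrals of `f ∘ W₀` over `[0, 1/2]` and `[0, 1]` in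
terms of those of `f` show that the primitives of `f ∘ W₀^n` decay exponentially when `f` has mean
zero for `h0`. Since `W_a → W₀` uniformly, `∫ f dμ_a` is close to `∫ f ∘ W₀^n dμ_a` for `a` small,
and the latter is at most `C` times those primitives, hence small for `n` large.
-/

/-! ### Interval integral bounds -/

/-- `IntegralBoundOn f s A B`: the integrals of `f` over the intervals `[u, v] ⊆ s` are at most
`A + B * (v - u)` in absolute value. It is dual to controlling the total variation of a density
(through `A`) and its `L¹` norm (through `B`). -/
def IntegralBoundOn (f : ℝ → ℝ) (s : Set ℝ) (A B : ℝ) : Prop :=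
  ∀ ⦃u v : ℝ⦄, u ≤ v → Set.Icc u v ⊆ s → |∫ x in u..v, f x| ≤ A + B * (v - u)

namespace IntegralBoundOn

variable {f W : ℝ → ℝ} {s t : Set ℝ} {A A' B B' : ℝ}

lemma mono (hf : IntegralBoundOn f t A B) (hst : s ⊆ t) (hA : A ≤ A') (hB : B ≤ B') :
    IntegralBoundOn f s A' B' := fun _ _ huv hs =>
  (hf huv (hs.trans hst)).trans
    (add_le_add hA (mul_le_mul_of_nonneg_right hB (sub_nonneg.2 huv)))

lemma nonneg (hf : IntegralBoundOn f s A B) (hs : s.Nonempty) : 0 ≤ A := by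
  obtain ⟨x, hx⟩ := hs
  simpa using hf le_rfl (by simpa using hx : Set.Icc x x ⊆ s)

lemma comp_mul_add (hf : IntegralBoundOn f Set.univ A B) {c : ℝ} (hc : c ≠ 0) (d : ℝ) :
    IntegralBoundOn (fun x => f (c * x + d)) Set.univ (|c|⁻¹ * A) B := by
  intro u v huv _
  have hc' : |c| ≠ 0 := abs_ne_zero.2 hc
  have hlength : |∫ x in c * u + d..c * v + d, f x| ≤ A + B * (|c| * (v - u)) := by
    rcases hc.lt_or_gt with hneg | hpos
    · rw [intervalIntegral.integral_symm, abs_neg, abs_of_neg hneg]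
      exact (hf (by nlinarith) (Set.subset_univ _)).trans_eq (by ring)
    · rw [abs_of_pos hpos]
      exact (hf (by nlinarith) (Set.subset_univ _)).trans_eq (by ring)
  calc |∫ x in u..v, f (c * x + d)| = |c|⁻¹ * |∫ x in c * u + d..c * v + d, f x| := by
        rw [intervalIntegral.integral_comp_mul_add _ hc, smul_eq_mul, abs_mul, abs_inv]
    _ ≤ |c|⁻¹ * (A + B * (|c| * (v - u))) := by gcongr
    _ = |c|⁻¹ * A + B * (v - u) := by rw [mul_add, mul_left_comm, inv_mul_cancel_left₀ hc']

lemma congr (hf : IntegralBoundOn f s A B) {g : ℝ → ℝ} (hfg : Set.EqOn f g s) :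
    IntegralBoundOn g s A B := by
  intro u v huv hs
  rw [← intervalIntegral.integral_congr fun x hx => hfg (hs (Set.uIcc_of_le huv ▸ hx))]
  exact hf huv hs

lemma comp_of_eqOn_mul_add (hf : IntegralBoundOn f Set.univ A B) {c : ℝ} (hc : c ≠ 0) (d : ℝ)
    (hW : Set.EqOn W (fun x => c * x + d) s) :
    IntegralBoundOn (fun x => f (W x)) s (|c|⁻¹ * A) B :=
  ((hf.comp_mul_add hc d).mono (Set.subset_univ s) le_rfl le_rfl).congr
    fun x hx => by simp only [hW hx]

lemma comp_const_sub (hf : IntegralBoundOn f s A B) (c : ℝ) :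
    IntegralBoundOn (fun x => f (c - x)) ((c - ·) ⁻¹' s) A B := by
  intro u v huv hs
  rw [intervalIntegral.integral_comp_sub_left]
  refine (hf (by linarith) fun x hx => ?_).trans_eq (by ring)
  simpa using hs (⟨by linarith [hx.2], by linarith [hx.1]⟩ : c - x ∈ Set.Icc u v)

lemma add_of_split (m : ℝ) (hf : ∀ u v, IntervalIntegrable f volume u v) (hA : 0 ≤ A)
    (hA' : 0 ≤ A') (hleft : IntegralBoundOn f (s ∩ Set.Iic m) A B)
    (hright : IntegralBoundOn f (s ∩ Set.Ici m) A' B) :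
    IntegralBoundOn f s (A + A') B := by
  intro u v huv hs
  rcases le_total v m with hvm | hmv
  · exact (hleft huv fun x hx => ⟨hs hx, hx.2.trans hvm⟩).trans (by linarith)
  rcases le_total m u with hmu | hum
  · exact (hright huv fun x hx => ⟨hs hx, hmu.trans hx.1⟩).trans (by linarith)
  rw [← intervalIntegral.integral_add_adjacent_intervals (hf u m) (hf m v)]
  have hl := hleft hum fun x hx => ⟨hs ⟨hx.1, hx.2.trans hmv⟩, hx.2⟩
  have hr := hright hmv fun x hx => ⟨hs ⟨hum.trans hx.1, hx.2⟩, hx.1⟩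
  exact (abs_add_le _ _).trans (by linarith)

-- An interval meeting both sides of `m` either stays within distance `δ` of `m` or has length at
-- least `δ`; in the second case the extra `A` is absorbed in the length term.
lemma univ_of_overlap {m δ : ℝ} (hδ : 0 < δ) (hf : ∀ u v, IntervalIntegrable f volume u v)
    (hA : 0 ≤ A) (hleft : IntegralBoundOn f (Set.Iic m) A B)
    (hmid : IntegralBoundOn f (Set.Icc (m - δ) (m + δ)) A B)
    (hright : IntegralBoundOn f (Set.Ici m) A B) :
    IntegralBoundOn f Set.univ A (B + A / δ) := by
  have hsplit : IntegralBoundOn f Set.univ (A + A) B :=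
    add_of_split m hf hA hA (by rwa [Set.univ_inter]) (by rwa [Set.univ_inter])
  intro u v huv _
  rcases le_or_gt δ (v - u) with hlong | hshort
  · have habsorb : A ≤ A / δ * (v - u) := by
      rw [div_mul_eq_mul_div, le_div_iff₀ hδ]
      gcongr
    linarith [hsplit huv (Set.subset_univ _)]
  · have hextra : 0 ≤ A / δ * (v - u) := mul_nonneg (by positivity) (sub_nonneg.2 huv)
    suffices |∫ x in u..v, f x| ≤ A + B * (v - u) by linarith
    rcases le_total v m with hvm | hmv
    · exact hleft huv fun x hx => hx.2.trans hvm
    rcases le_total m u with hmu | hum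
    · exact hright huv fun x hx => hmu.trans hx.1
    exact hmid huv fun x hx => ⟨by linarith [hx.1], by linarith [hx.2]⟩

end IntegralBoundOn

lemma intervalIntegrable_of_measurable_of_bound {f : ℝ → ℝ} (hf : Measurable f) {M : ℝ}
    (hM : ∀ x, |f x| ≤ M) (u v : ℝ) : IntervalIntegrable f volume u v :=
  (Measure.integrableOn_of_bounded (M := M) (by simp) hf.aestronglyMeasurable
    (ae_of_all _ hM)).intervalIntegrable

lemma tendsto_integral_norm_comp_add_sub {G E : Type*} [AddGroup G] [TopologicalSpace G]
    [IsTopologicalAddGroup G] [MeasurableSpace G] [BorelSpace G] [NormedAddCommGroup E]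
    {ν : Measure G} [IsLocallyFiniteMeasure ν] [ν.InnerRegularCompactLTTop]
    [ν.IsAddRightInvariant] {F : G → E} (hF : Integrable F ν) :
    Tendsto (fun s => ∫ x, ‖F (x + s) - F x‖ ∂ν) (𝓝 0) (𝓝 0) := by
  let addRight : C(G, C(G, G)) := ContinuousMap.curry ⟨fun z => z.2 + z.1, by fun_prop⟩
  have htranslate (s : G) : MeasurePreserving (addRight s) ν ν := measurePreserving_add_right ν s
  let translate (s : G) : Lp E 1 ν := Lp.compMeasurePreserving (addRight s) (htranslate s) hF.toL1
  have hcont : Continuous translate :=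
    continuous_const.compMeasurePreservingLp addRight.continuous htranslate ENNReal.one_ne_top
  have htranslate_ae (s : G) : translate s =ᵐ[ν] fun x => F (x + s) :=
    (Lp.coeFn_compMeasurePreserving hF.toL1 (htranslate s)).trans
      ((htranslate s).quasiMeasurePreserving.ae_eq_comp hF.coeFn_toL1)
  have hnorm (s : G) : ‖translate s - hF.toL1‖ = ∫ x, ‖F (x + s) - F x‖ ∂ν := by
    rw [L1.norm_eq_integral_norm]
    refine integral_congr_ae ?_
    filter_upwards [Lp.coeFn_sub (translate s) hF.toL1, htranslate_ae s, hF.coeFn_toL1]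
      with x hsub hxs hx
    rw [hsub, Pi.sub_apply, hxs, hx]
  have htendsto : Tendsto (fun s => ‖translate s - hF.toL1‖) (𝓝 0) (𝓝 0) :=
    Continuous.tendsto' (by fun_prop) 0 0 (by simp [hnorm])
  simpa only [hnorm] using htendsto

section Averaging

variable {F ψ : ℝ → ℝ} {A B M h : ℝ}

lemma integrable_mul_comp_sub (hF : Integrable F) (hψ : Measurable ψ) (hM : ∀ x, |ψ x| ≤ M)
    (ν : Measure ℝ) [IsFiniteMeasure ν] :
    Integrable (fun z : ℝ × ℝ => F z.1 * ψ (z.1 - z.2)) (volume.prod ν) :=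
  (hF.comp_fst ν).mul_bdd (c := M)
    (hψ.comp (measurable_fst.sub measurable_snd)).aestronglyMeasurable
    (ae_of_all _ fun z => hM (z.1 - z.2))

lemma abs_integral_mul_le (hF : Integrable F) (hM : ∀ x, |ψ x| ≤ M) :
    |∫ x, F x * ψ x| ≤ M * ∫ x, ‖F x‖ := by
  rw [← integral_const_mul, ← Real.norm_eq_abs]
  refine norm_integral_le_of_norm_le (hF.norm.const_mul M) (ae_of_all _ fun x => ?_)
  rw [norm_mul, mul_comm]
  exact mul_le_mul_of_nonneg_right (hM x) (norm_nonneg _)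

lemma abs_integral_mul_comp_sub_sub_le (hF : Integrable F) (hψ : Measurable ψ)
    (hM : ∀ x, |ψ x| ≤ M) (s : ℝ) :
    |(∫ x, F x * ψ (x - s)) - ∫ x, F x * ψ x| ≤ M * ∫ x, ‖F (x + s) - F x‖ := by
  have hint {F' : ℝ → ℝ} (hF' : Integrable F') : Integrable fun x => F' x * ψ x :=
    hF'.mul_bdd (c := M) hψ.aestronglyMeasurable (ae_of_all _ hM)
  have hFs : Integrable fun x => F (x + s) := hF.comp_add_right s
  rw [← integral_add_right_eq_self _ s]
  simp only [add_sub_cancel_right]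
  rw [← integral_sub (hint hFs) (hint hF)]
  simp only [← sub_mul]
  exact abs_integral_mul_le (hFs.sub hF) hM

lemma IntegralBoundOn.abs_intervalIntegral_integral_mul_comp_sub_le
    (hbound : IntegralBoundOn ψ Set.univ A B) (hψ : Measurable ψ) (hM : ∀ x, |ψ x| ≤ M)
    (hF : Integrable F) (hh : 0 ≤ h) :
    |∫ s in 0..h, ∫ x, F x * ψ (x - s)| ≤ (A + B * h) * ∫ x, ‖F x‖ := by
  have hwindow (x : ℝ) : |∫ s in 0..h, ψ (x - s)| ≤ A + B * h := by
    rw [intervalIntegral.integral_comp_sub_left]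
    exact (hbound (by linarith) (Set.subset_univ _)).trans_eq (by ring)
  have hswap : ∫ s in 0..h, ∫ x, F x * ψ (x - s) = ∫ x, F x * ∫ s in 0..h, ψ (x - s) := by
    simp only [intervalIntegral.integral_of_le hh, ← integral_const_mul]
    exact (integral_integral_swap (integrable_mul_comp_sub hF hψ hM _)).symm
  rw [hswap]
  exact abs_integral_mul_le hF hwindow

-- Averaging the translates of `ψ` over a window of length `h` smooths `ψ` down to its interval
-- integrals, while costing only the `L¹` modulus of continuity of `F`.
lemma IntegralBoundOn.abs_integral_mul_le_add (hbound : IntegralBoundOn ψ Set.univ A B)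
    (hψ : Measurable ψ) (hM : ∀ x, |ψ x| ≤ M) (hF : Integrable F) (hh : 0 < h) {η : ℝ}
    (hη : ∀ s ∈ Set.Ioc 0 h, ∫ x, ‖F (x + s) - F x‖ ≤ η) :
    |∫ x, F x * ψ x| ≤ M * η + (A / h + B) * ∫ x, ‖F x‖ := by
  have hM0 : 0 ≤ M := (abs_nonneg _).trans (hM 0)
  have hint : IntervalIntegrable (fun s => ∫ x, F x * ψ (x - s)) volume 0 h :=
    (intervalIntegrable_iff_integrableOn_Ioc_of_le hh.le).2
      (integrable_mul_comp_sub hF hψ hM _).integral_prod_right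
  have hdefect : |(∫ s in 0..h, ∫ x, F x * ψ (x - s)) - h * ∫ x, F x * ψ x| ≤ M * η * h := by
    have hconst : h * ∫ x, F x * ψ x = ∫ _ in 0..h, ∫ x, F x * ψ x := by simp
    rw [hconst, ← intervalIntegral.integral_sub hint intervalIntegrable_const]
    have hle : ∀ s ∈ Set.uIoc 0 h, ‖(∫ x, F x * ψ (x - s)) - ∫ x, F x * ψ x‖ ≤ M * η := by
      intro s hs
      rw [Set.uIoc_of_le hh.le] at hs
      exact (abs_integral_mul_comp_sub_sub_le hF hψ hM s).trans (by gcongr; exact hη s hs)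
    simpa [abs_of_pos hh] using intervalIntegral.norm_integral_le_of_norm_le_const hle
  have haverage := hbound.abs_intervalIntegral_integral_mul_comp_sub_le hψ hM hF hh.le
  have htriangle := abs_sub_abs_le_abs_sub (h * ∫ x, F x * ψ x) (∫ s in 0..h, ∫ x, F x * ψ (x - s))
  rw [abs_mul, abs_of_pos hh, abs_sub_comm] at htriangle
  refine le_of_mul_le_mul_left ?_ hh
  calc h * |∫ x, F x * ψ x| ≤ M * η * h + (A + B * h) * ∫ x, ‖F x‖ := by linarith
    _ = h * (M * η + (A / h + B) * ∫ x, ‖F x‖) := by field_simp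

end Averaging

lemma abs_le_of_integralBoundOn_of_integral_eq {ν : Measure ℝ} [IsProbabilityMeasure ν]
    (hν : ν ≪ volume) {ψ : ℕ → ℝ → ℝ} (hψ : ∀ n, Measurable (ψ n)) {M B c : ℝ}
    (hM : ∀ n x, |ψ n x| ≤ M) {A : ℕ → ℝ} (hA : Tendsto A atTop (𝓝 0))
    (hbound : ∀ n, IntegralBoundOn (ψ n) Set.univ (A n) B) (hc : ∀ n, ∫ x, ψ n x ∂ν = c) :
    |c| ≤ B := by
  set F : ℝ → ℝ := fun x => (ν.rnDeriv volume x).toReal with hFdef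
  have hF : Integrable F := Measure.integrable_toReal_rnDeriv
  have hFnorm : ∫ x, ‖F x‖ = 1 := by
    simp only [hFdef, Real.norm_of_nonneg ENNReal.toReal_nonneg]
    simp [Measure.integral_toReal_rnDeriv hν]
  have hcF (n : ℕ) : ∫ x, F x * ψ n x = c := by
    simpa only [smul_eq_mul, hc n] using integral_rnDeriv_smul (f := ψ n) hν
  have happrox : ∀ η > 0, |c| ≤ M * η + B := by
    intro η hη
    obtain ⟨δ, hδ, hmod⟩ := Metric.eventually_nhds_iff.1
      ((tendsto_integral_norm_comp_add_sub hF).eventually_le_const hη)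
    have hstep (n : ℕ) : |c| ≤ M * η + (A n / (δ / 2) + B) := by
      have hn := (hbound n).abs_integral_mul_le_add (hψ n) (hM n) hF (half_pos hδ) (η := η)
        fun s hs => hmod (by rw [Real.dist_eq, sub_zero, abs_of_pos hs.1]; linarith [hs.2])
      rwa [hcF, hFnorm, mul_one] at hn
    refine ge_of_tendsto' (x := atTop) ?_ hstep
    simpa using ((hA.div_const (δ / 2)).add_const B).const_add (M * η)
  have hlim : Tendsto (fun η => M * η + B) (𝓝[>] 0) (𝓝 B) :=
    ((by fun_prop : Continuous fun η => M * η + B).tendsto' 0 B (by simp)).mono_left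
      nhdsWithin_le_nhds
  exact ge_of_tendsto hlim (eventually_mem_nhdsWithin.mono happrox)

/-! ### Dual Lasota–Yorke inequalities -/

lemma integral_comp_of_measurePreserving {α : Type*} [MeasurableSpace α] {ν : Measure α} {W : α → α}
    {f : α → ℝ} (hW : MeasurePreserving W ν ν) (hf : Measurable f) :
    ∫ x, f (W x) ∂ν = ∫ x, f x ∂ν := by
  rw [← integral_map hW.measurable.aemeasurable hf.aestronglyMeasurable, hW.map_eq]

/-- A Lasota–Yorke inequality for the transfer operator of `W` in dual form, that is, stated for
composition with `W` on bounded measurable functions: the variation part of an integral bound is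
contracted by `θ`, at the price of `K` times that part in the length term. -/
def DualLasotaYorke (W : ℝ → ℝ) (θ K : ℝ) : Prop :=
  ∀ ⦃f : ℝ → ℝ⦄, Measurable f → (∃ M, ∀ x, |f x| ≤ M) → ∀ ⦃A B : ℝ⦄,
    IntegralBoundOn f Set.univ A B → IntegralBoundOn (fun x => f (W x)) Set.univ (θ * A) (B + K * A)

namespace DualLasotaYorke

variable {W f : ℝ → ℝ} {θ K M N : ℝ}

lemma iterate (hW : DualLasotaYorke W θ K) (hWm : Measurable W) (hf : Measurable f)
    (hM : ∀ x, |f x| ≤ M) (hN : IntegralBoundOn f Set.univ N 0) (n : ℕ) :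
    IntegralBoundOn (fun x => f (W^[n] x)) Set.univ (θ ^ n * N)
      (K * N * ∑ j ∈ Finset.range n, θ ^ j) := by
  induction n with
  | zero => simpa using hN
  | succ n ih =>
    have hstep := hW (hf.comp (hWm.iterate n)) ⟨M, fun x => hM _⟩ ih
    simp only [Function.iterate_succ, Function.comp_apply]
    refine hstep.mono subset_rfl (le_of_eq (by ring)) (le_of_eq ?_)
    rw [Finset.sum_range_succ]
    ring

-- Invariance makes `∫ f ∘ W^[n] ∂ν` independent of `n`, and only the length term survives as
-- `n → ∞`.
theorem abs_integral_le (hW : DualLasotaYorke W θ K) (hθ : 0 ≤ θ) (hθ1 : θ < 1) (hK : 0 ≤ K)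
    {ν : Measure ℝ} [IsProbabilityMeasure ν] (hν : ν ≪ volume) (hWν : MeasurePreserving W ν ν)
    (hf : Measurable f) (hM : ∀ x, |f x| ≤ M) (hN : IntegralBoundOn f Set.univ N 0) :
    |∫ x, f x ∂ν| ≤ K * N * (1 - θ)⁻¹ := by
  have hN0 : 0 ≤ N := hN.nonneg Set.univ_nonempty
  have hgeom (n : ℕ) : ∑ j ∈ Finset.range n, θ ^ j ≤ (1 - θ)⁻¹ :=
    (summable_geometric_of_lt_one hθ hθ1).sum_le_tsum _ (fun j _ => pow_nonneg hθ j) |>.trans_eq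
      (tsum_geometric_of_lt_one hθ hθ1)
  refine abs_le_of_integralBoundOn_of_integral_eq hν (ψ := fun n x => f (W^[n] x))
    (A := fun n => θ ^ n * N) (fun n => hf.comp (hWν.measurable.iterate n)) (fun n x => hM _) ?_
    (fun n => ?_) (fun n => ?_)
  · simpa using (tendsto_pow_atTop_nhds_zero_of_lt_one hθ hθ1).mul_const N
  · exact (hW.iterate hWν.measurable hf hM hN n).mono subset_rfl le_rfl (by gcongr; exact hgeom n)
  · exact integral_comp_of_measurePreserving (hWν.iterate n) hf

end DualLasotaYorke

/-! ### W-shaped maps -/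

/-- The left zero of the W-shaped map whose second branch has slope `S` and ends at height
`1/2 + e` over `1/2`. -/
noncomputable def leftZero (S e : ℝ) : ℝ :=
  1 / 2 - (1 / 2 + e) / S

/-- The W-shaped map with inner slopes `S`, `-T` and central height `1/2 + e`. Writing it through
`max` and `min` makes continuity and the symmetry `x ↦ 1 - x` immediate. -/
noncomputable def wShape (S T e x : ℝ) : ℝ :=
  max (max (1 - x / leftZero S e) (1 - (1 - x) / leftZero T e))
    (1 / 2 + e + min (S * (x - 1 / 2)) (T * (1 / 2 - x)))

section wShape

variable {S T e x : ℝ}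

lemma leftZero_pos (he : -(1 / 2) < e) (hS : 1 + 2 * e < S) : 0 < leftZero S e := by
  rw [leftZero, sub_pos, div_lt_iff₀ (by linarith)]
  linarith

lemma leftZero_lt_half (he : -(1 / 2) < e) (hS : 1 + 2 * e < S) : leftZero S e < 1 / 2 :=
  sub_lt_self _ (div_pos (by linarith) (by linarith))

lemma mul_leftZero (hS : S ≠ 0) : S * leftZero S e = S / 2 - (1 / 2 + e) := by
  rw [leftZero]
  field_simp

lemma continuous_wShape (S T e : ℝ) : Continuous (wShape S T e) := by
  unfold wShape
  fun_prop

lemma wShape_one_sub (S T e x : ℝ) : wShape S T e (1 - x) = wShape T S e x := by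
  unfold wShape
  rw [max_comm (1 - (1 - x) / leftZero S e), min_comm]
  ring_nf

lemma wShape_of_le_leftZero (he : -(1 / 2) < e) (hS : 1 + 2 * e < S) (hT : 1 + 2 * e < T)
    (hx : x ≤ leftZero S e) : wShape S T e x = 1 - x / leftZero S e := by
  have hS0 : 0 < S := by linarith
  have hk := leftZero_lt_half he hS
  have houter : x / leftZero S e ≤ 1 := (div_le_one (leftZero_pos he hS)).2 hx
  have hopposite : 1 ≤ (1 - x) / leftZero T e :=
    (one_le_div (leftZero_pos he hT)).2 (by linarith [leftZero_lt_half he hT])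
  have hinner : S * (x - 1 / 2) ≤ -(1 / 2 + e) := by
    linarith [mul_le_mul_of_nonneg_left hx hS0.le, mul_leftZero (e := e) hS0.ne']
  unfold wShape
  rw [max_eq_left (by linarith : 1 - (1 - x) / leftZero T e ≤ 1 - x / leftZero S e), max_eq_left]
  linarith [min_le_left (S * (x - 1 / 2)) (T * (1 / 2 - x))]

lemma wShape_of_mem_Icc_leftZero_half (he : -(1 / 2) < e) (hS : 1 + 2 * e < S)
    (hT : 1 + 2 * e < T) (hx : x ∈ Set.Icc (leftZero S e) (1 / 2)) :
    wShape S T e x = S * (x - leftZero S e) := by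
  have hS0 : 0 < S := by linarith
  have houter : 1 ≤ x / leftZero S e := (one_le_div (leftZero_pos he hS)).2 hx.1
  have hopposite : 1 ≤ (1 - x) / leftZero T e :=
    (one_le_div (leftZero_pos he hT)).2 (by linarith [leftZero_lt_half he hT, hx.2])
  have hpos : 0 ≤ S * (x - leftZero S e) := mul_nonneg hS0.le (sub_nonneg.2 hx.1)
  have hmin : S * (x - 1 / 2) ≤ T * (1 / 2 - x) :=
    (mul_nonpos_of_nonneg_of_nonpos hS0.le (by linarith [hx.2])).trans
      (mul_nonneg (by linarith) (by linarith [hx.2]))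
  have hinner : 1 / 2 + e + S * (x - 1 / 2) = S * (x - leftZero S e) := by
    linarith [mul_leftZero (e := e) hS0.ne']
  unfold wShape
  rw [min_eq_left hmin, hinner, max_eq_right]
  exact max_le (by linarith) (by linarith)

lemma wShape_of_one_sub_leftZero_le (he : -(1 / 2) < e) (hS : 1 + 2 * e < S) (hT : 1 + 2 * e < T)
    (hx : 1 - leftZero T e ≤ x) : wShape S T e x = 1 - (1 - x) / leftZero T e := by
  rw [← wShape_of_le_leftZero he hT hS (by linarith), wShape_one_sub]

lemma wShape_of_mem_Icc_half_one_sub_leftZero (he : -(1 / 2) < e) (hS : 1 + 2 * e < S)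
    (hT : 1 + 2 * e < T) (hx : x ∈ Set.Icc (1 / 2) (1 - leftZero T e)) :
    wShape S T e x = T * (1 - x - leftZero T e) := by
  rw [← wShape_of_mem_Icc_leftZero_half he hT hS ⟨by linarith [hx.2], by linarith [hx.1]⟩,
    wShape_one_sub]

lemma inv_leftZero (hS : S ≠ 0) : (leftZero S e)⁻¹ = 2 * S / (S - 1 - 2 * e) := by
  have hk : leftZero S e = (S - 1 - 2 * e) / (2 * S) := by
    rw [leftZero]
    field_simp
    ring
  rw [hk, inv_div]

lemma Wmap_eq_wShape {s₁ s₂ p q r a : ℝ} (he : -(1 / 2) < r * a)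
    (hS : 1 + 2 * (r * a) < s₁ + p * a) (hT : 1 + 2 * (r * a) < s₂ + q * a) :
    Wmap s₁ s₂ p q r a = wShape (s₁ + p * a) (s₂ + q * a) (r * a) := by
  have hS0 : s₁ + p * a ≠ 0 := by linarith
  have hT0 : s₂ + q * a ≠ 0 := by linarith
  have hSouter : 2 * (s₁ + p * a) / (s₁ - 1 + p * a - 2 * r * a)
      = (leftZero (s₁ + p * a) (r * a))⁻¹ := by
    rw [inv_leftZero hS0]
    ring_nf
  have hTouter : 2 * (s₂ + q * a) / (s₂ - 1 + q * a - 2 * r * a)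
      = (leftZero (s₂ + q * a) (r * a))⁻¹ := by
    rw [inv_leftZero hT0]
    ring_nf
  have hTzero : 1 / 2 + (1 / 2 + r * a) / (s₂ + q * a) = 1 - leftZero (s₂ + q * a) (r * a) := by
    rw [leftZero]
    ring
  ext x
  rw [Wmap, hSouter, hTouter, hTzero, ← leftZero]
  split_ifs with h₁ h₂ h₃
  · rw [wShape_of_le_leftZero he hS hT h₁.le, div_eq_inv_mul]
  · rw [wShape_of_mem_Icc_leftZero_half he hS hT ⟨not_lt.1 h₁, h₂.le⟩]
    linear_combination mul_leftZero (e := r * a) hS0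
  · rw [wShape_of_mem_Icc_half_one_sub_leftZero he hS hT ⟨not_lt.1 h₂, h₃.le⟩]
    linear_combination mul_leftZero (e := r * a) hT0
  · rw [wShape_of_one_sub_leftZero_le he hS hT (not_lt.1 h₃)]
    ring

end wShape

section DualLasotaYorkeWShape

variable {S T e θ δ : ℝ}

lemma eqOn_wShape_Iic_leftZero (he : -(1 / 2) < e) (hS : 1 + 2 * e < S) (hT : 1 + 2 * e < T) :
    Set.EqOn (wShape S T e) (fun x => -(leftZero S e)⁻¹ * x + 1) (Set.Iic (leftZero S e)) :=
  fun x hx => by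
    simp only [wShape_of_le_leftZero he hS hT hx]
    ring

lemma eqOn_wShape_Icc_leftZero_half (he : -(1 / 2) < e) (hS : 1 + 2 * e < S)
    (hT : 1 + 2 * e < T) :
    Set.EqOn (wShape S T e) (fun x => S * x + -(S * leftZero S e))
      (Set.Icc (leftZero S e) (1 / 2)) :=
  fun x hx => by
    simp only [wShape_of_mem_Icc_leftZero_half he hS hT hx]
    ring

variable {f : ℝ → ℝ} {A B M : ℝ}

lemma IntegralBoundOn.comp_wShape_Icc_leftZero_half (he : -(1 / 2) < e) (hS : 1 + 2 * e < S)
    (hT : 1 + 2 * e < T) (hbound : IntegralBoundOn f Set.univ A B) :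
    IntegralBoundOn (fun x => f (wShape S T e x)) (Set.Icc (leftZero S e) (1 / 2)) (S⁻¹ * A) B := by
  have hS0 : 0 < S := by linarith
  simpa only [abs_of_pos hS0] using hbound.comp_of_eqOn_mul_add hS0.ne' _
    (eqOn_wShape_Icc_leftZero_half he hS hT)

lemma intervalIntegrable_comp_wShape (hf : Measurable f) (hM : ∀ x, |f x| ≤ M) (u v : ℝ) :
    IntervalIntegrable (fun x => f (wShape S T e x)) volume u v :=
  intervalIntegrable_of_measurable_of_bound (hf.comp (continuous_wShape S T e).measurable)
    (fun _ => hM _) u v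

lemma IntegralBoundOn.comp_wShape_Iic_half (he : -(1 / 2) < e) (hS : 1 + 2 * e < S)
    (hT : 1 + 2 * e < T) (hf : Measurable f) (hM : ∀ x, |f x| ≤ M)
    (hbound : IntegralBoundOn f Set.univ A B) :
    IntegralBoundOn (fun x => f (wShape S T e x)) (Set.Iic (1 / 2))
      (leftZero S e * A + S⁻¹ * A) B := by
  have hS0 : 0 < S := by linarith
  have hk := leftZero_pos he hS
  have hA : 0 ≤ A := hbound.nonneg Set.univ_nonempty
  have houter := hbound.comp_of_eqOn_mul_add (neg_ne_zero.2 (inv_ne_zero hk.ne')) 1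
    (eqOn_wShape_Iic_leftZero he hS hT)
  rw [abs_neg, abs_inv, inv_inv, abs_of_pos hk] at houter
  exact .add_of_split (leftZero S e) (intervalIntegrable_comp_wShape hf hM) (by positivity)
    (by positivity) (houter.mono Set.inter_subset_right le_rfl le_rfl)
    ((hbound.comp_wShape_Icc_leftZero_half he hS hT).mono (fun x hx => ⟨hx.2, hx.1⟩) le_rfl le_rfl)

lemma IntegralBoundOn.comp_wShape_Icc_leftZero_one_sub (he : -(1 / 2) < e) (hS : 1 + 2 * e < S)
    (hT : 1 + 2 * e < T) (hf : Measurable f) (hM : ∀ x, |f x| ≤ M)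
    (hbound : IntegralBoundOn f Set.univ A B) :
    IntegralBoundOn (fun x => f (wShape S T e x)) (Set.Icc (leftZero S e) (1 - leftZero T e))
      (S⁻¹ * A + T⁻¹ * A) B := by
  have hS0 : 0 < S := by linarith
  have hT0 : 0 < T := by linarith
  have hA : 0 ≤ A := hbound.nonneg Set.univ_nonempty
  have hright := (hbound.comp_wShape_Icc_leftZero_half he hT hS).comp_const_sub 1
  simp only [wShape_one_sub] at hright
  refine .add_of_split (1 / 2) (intervalIntegrable_comp_wShape hf hM) (by positivity)
    (by positivity) ?_ ?_
  · exact (hbound.comp_wShape_Icc_leftZero_half he hS hT).mono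
      (fun x hx => ⟨hx.1.1, hx.2⟩) le_rfl le_rfl
  · exact hright.mono
      (fun x hx => ⟨by linarith [hx.1.2], by linarith [Set.mem_Ici.1 hx.2]⟩) le_rfl le_rfl

-- An interval around the central turning point sees both inner branches: this is where
-- `S⁻¹ + T⁻¹ < 1` enters.
theorem dualLasotaYorke_wShape (he : -(1 / 2) < e) (hS : 1 + 2 * e < S) (hT : 1 + 2 * e < T)
    (hθS : leftZero S e + S⁻¹ ≤ θ) (hθT : leftZero T e + T⁻¹ ≤ θ) (hθ : S⁻¹ + T⁻¹ ≤ θ)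
    (hδ : 0 < δ) (hδS : leftZero S e ≤ 1 / 2 - δ) (hδT : leftZero T e ≤ 1 / 2 - δ) :
    DualLasotaYorke (wShape S T e) θ (θ / δ) := by
  rintro f hf ⟨M, hM⟩ A B hbound
  have hS0 : 0 < S := by linarith
  have hT0 : 0 < T := by linarith
  have hA : 0 ≤ A := hbound.nonneg Set.univ_nonempty
  have hθ0 : 0 ≤ θ := (by positivity : 0 ≤ S⁻¹ + T⁻¹).trans hθ
  have hscale {a b : ℝ} (hab : a + b ≤ θ) : a * A + b * A ≤ θ * A := by
    rw [← add_mul]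
    gcongr
  have hright := (hbound.comp_wShape_Iic_half he hT hS hf hM).comp_const_sub 1
  simp only [wShape_one_sub] at hright
  refine (IntegralBoundOn.univ_of_overlap (m := 1 / 2) (B := B) hδ
    (intervalIntegrable_comp_wShape hf hM) (mul_nonneg hθ0 hA) ?_ ?_ ?_).mono
      subset_rfl le_rfl (le_of_eq (by ring))
  · exact (hbound.comp_wShape_Iic_half he hS hT hf hM).mono subset_rfl (hscale hθS) le_rfl
  · exact (hbound.comp_wShape_Icc_leftZero_one_sub he hS hT hf hM).mono
      (Set.Icc_subset_Icc hδS (by linarith)) (hscale hθ) le_rfl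
  · refine hright.mono (fun x hx => ?_) (hscale hθT) le_rfl
    simp only [Set.mem_preimage, Set.mem_Iic, Set.mem_Ici] at hx ⊢
    linarith

end DualLasotaYorkeWShape

/-! ### Decay of primitives under the limit map -/

section Primitive

variable {S T e x : ℝ} {f W : ℝ → ℝ}

lemma intervalIntegral_comp_of_eqOn_mul_add {c d u v : ℝ} (huv : u ≤ v) (hc : c ≠ 0)
    (hW : Set.EqOn W (fun x => c * x + d) (Set.Icc u v)) :
    ∫ x in u..v, f (W x) = c⁻¹ * ∫ y in W u..W v, f y := by
  have hcongr : ∫ x in u..v, f (W x) = ∫ x in u..v, f (c * x + d) :=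
    intervalIntegral.integral_congr fun x hx => by
      simp only [hW (Set.uIcc_of_le huv ▸ hx)]
  rw [hcongr, intervalIntegral.integral_comp_mul_add _ hc, hW (Set.left_mem_Icc.2 huv),
    hW (Set.right_mem_Icc.2 huv), smul_eq_mul]

lemma integral_comp_wShape_eq_integral_comp_wShape_swap (S T e x : ℝ) (f : ℝ → ℝ) :
    ∫ y in x..1, f (wShape S T e y) = ∫ y in 0..1 - x, f (wShape T S e y) := by
  simpa only [wShape_one_sub, sub_self] using
    (intervalIntegral.integral_comp_sub_left (a := x) (b := 1)
      (fun y => f (wShape T S e y)) 1)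

lemma integral_comp_wShape_of_le_leftZero (he : -(1 / 2) < e) (hS : 1 + 2 * e < S)
    (hT : 1 + 2 * e < T) (hx : x ∈ Set.Icc 0 (leftZero S e)) :
    ∫ y in 0..x, f (wShape S T e y) = leftZero S e * ∫ y in wShape S T e x..1, f y := by
  have hk := leftZero_pos he hS
  have hzero : wShape S T e 0 = 1 := by rw [wShape_of_le_leftZero he hS hT hk.le]; simp
  rw [intervalIntegral_comp_of_eqOn_mul_add hx.1 (neg_ne_zero.2 (inv_ne_zero hk.ne'))
    ((eqOn_wShape_Iic_leftZero he hS hT).mono fun y hy => hy.2.trans hx.2), hzero,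
    intervalIntegral.integral_symm, inv_neg, inv_inv, neg_mul_neg]

lemma integral_comp_wShape_of_mem_Icc_leftZero_half (he : -(1 / 2) < e) (hS : 1 + 2 * e < S)
    (hT : 1 + 2 * e < T) (hf : Continuous f) (hx : x ∈ Set.Icc (leftZero S e) (1 / 2)) :
    ∫ y in 0..x, f (wShape S T e y)
      = leftZero S e * (∫ y in 0..1, f y) + S⁻¹ * ∫ y in 0..wShape S T e x, f y := by
  have hk := leftZero_pos he hS
  have hcont : Continuous fun y => f (wShape S T e y) := hf.comp (continuous_wShape S T e)
  have hzero : wShape S T e (leftZero S e) = 0 := by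
    rw [wShape_of_le_leftZero he hS hT le_rfl, div_self hk.ne', sub_self]
  rw [← intervalIntegral.integral_add_adjacent_intervals (hcont.intervalIntegrable 0 _)
    (hcont.intervalIntegrable (leftZero S e) x),
    integral_comp_wShape_of_le_leftZero he hS hT ⟨hk.le, le_rfl⟩,
    intervalIntegral_comp_of_eqOn_mul_add hx.1 (by linarith : S ≠ 0)
      ((eqOn_wShape_Icc_leftZero_half he hS hT).mono (Set.Icc_subset_Icc_right hx.2)), hzero]

lemma abs_integral_comp_wShape_sub_le (he : -(1 / 2) < e) (hS : 1 + 2 * e < S)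
    (hT : 1 + 2 * e < T) (hf : Continuous f) {κ : ℝ} (hκ : 1 / 2 ≤ κ) (hκS : S⁻¹ ≤ κ)
    (hx : x ∈ Set.Icc 0 (1 / 2)) :
    |(∫ y in 0..x, f (wShape S T e y)) - leftZero S e * ∫ y in 0..1, f y|
      ≤ κ * |∫ y in 0..wShape S T e x, f y| := by
  have hS0 : 0 < S := by linarith
  have hk := leftZero_pos he hS
  rcases le_total x (leftZero S e) with hxk | hkx
  · have hsplit := intervalIntegral.integral_interval_sub_left (hf.intervalIntegrable 0 1)
      (hf.intervalIntegrable (μ := volume) 0 (wShape S T e x))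
    rw [integral_comp_wShape_of_le_leftZero he hS hT ⟨hx.1, hxk⟩, ← hsplit, ← mul_sub,
      sub_sub_cancel_left, abs_mul, abs_neg, abs_of_pos hk]
    gcongr
    exact (leftZero_lt_half he hS).le.trans hκ
  · rw [integral_comp_wShape_of_mem_Icc_leftZero_half he hS hT hf ⟨hkx, hx.2⟩, add_sub_cancel_left,
      abs_mul, abs_of_pos (inv_pos.2 hS0)]
    gcongr

lemma wShape_mem_Icc_of_mem_Icc_half (he : -(1 / 2) < e) (he' : e ≤ 1 / 2) (hS : 1 + 2 * e < S)
    (hT : 1 + 2 * e < T) (hx : x ∈ Set.Icc 0 (1 / 2)) : wShape S T e x ∈ Set.Icc 0 1 := by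
  have hS0 : 0 < S := by linarith
  have hk := leftZero_pos he hS
  rcases le_total x (leftZero S e) with hxk | hkx
  · rw [wShape_of_le_leftZero he hS hT hxk, Set.mem_Icc, sub_nonneg, div_le_one hk]
    exact ⟨hxk, sub_le_self _ (div_nonneg hx.1 hk.le)⟩
  · rw [wShape_of_mem_Icc_leftZero_half he hS hT ⟨hkx, hx.2⟩]
    refine ⟨mul_nonneg hS0.le (sub_nonneg.2 hkx), ?_⟩
    linarith [mul_le_mul_of_nonneg_left hx.2 hS0.le, mul_leftZero (e := e) hS0.ne']

lemma mapsTo_wShape (he : -(1 / 2) < e) (he' : e ≤ 1 / 2) (hS : 1 + 2 * e < S)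
    (hT : 1 + 2 * e < T) : Set.MapsTo (wShape S T e) (Set.Icc 0 1) (Set.Icc 0 1) := by
  intro x hx
  rcases le_total x (1 / 2) with hle | hge
  · exact wShape_mem_Icc_of_mem_Icc_half he he' hS hT ⟨hx.1, hle⟩
  · rw [← wShape_one_sub]
    exact wShape_mem_Icc_of_mem_Icc_half he he' hT hS ⟨by linarith [hx.2], by linarith⟩

end Primitive

section LimitMap

variable {s₁ s₂ κ B : ℝ} {f : ℝ → ℝ}

lemma integral_mul_h0_eq_add (s₁ s₂ : ℝ) (hf : Continuous f) :
    ∫ x in Set.Icc 0 1, f x * h0 s₁ s₂ x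
      = (∫ x in 0..1 / 2, f x) * (2 * s₁ * (s₂ + 1) / (2 * s₁ * s₂ + s₁ - s₂))
        + (∫ x in 1 / 2..1, f x) * (2 * s₂ * (s₁ - 1) / (2 * s₁ * s₂ + s₁ - s₂)) := by
  have hleft : Set.EqOn (fun x => f x * (2 * s₁ * (s₂ + 1) / (2 * s₁ * s₂ + s₁ - s₂)))
      (fun x => f x * h0 s₁ s₂ x) (Set.uIoo 0 (1 / 2)) := by
    rw [Set.uIoo_of_le (by norm_num)]
    exact fun x hx => by simp only [h0, if_pos hx.2]
  have hright : Set.EqOn (fun x => f x * (2 * s₂ * (s₁ - 1) / (2 * s₁ * s₂ + s₁ - s₂)))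
      (fun x => f x * h0 s₁ s₂ x) (Set.uIoo (1 / 2) 1) := by
    rw [Set.uIoo_of_le (by norm_num)]
    exact fun x hx => by simp only [h0, if_neg hx.1.not_gt]
  rw [integral_Icc_eq_integral_Ioc, ← intervalIntegral.integral_of_le zero_le_one,
    ← intervalIntegral.integral_add_adjacent_intervals
      (((hf.mul_const _).intervalIntegrable _ _).congr_uIoo hleft)
      (((hf.mul_const _).intervalIntegrable _ _).congr_uIoo hright),
    ← intervalIntegral.integral_congr_uIoo hleft, ← intervalIntegral.integral_congr_uIoo hright,
    intervalIntegral.integral_mul_const, intervalIntegral.integral_mul_const]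

lemma integral_mul_h0 (hs₁ : s₁ ≠ 0) (hs₂ : s₂ ≠ 0) (hf : Continuous f) :
    ∫ x in Set.Icc 0 1, f x * h0 s₁ s₂ x
      = 2 * s₁ * s₂ / (2 * s₁ * s₂ + s₁ - s₂)
        * ((s₁⁻¹ + s₂⁻¹) * (∫ x in 0..1 / 2, f x) + (1 - s₁⁻¹) * ∫ x in 0..1, f x) := by
  rw [integral_mul_h0_eq_add s₁ s₂ hf, ← intervalIntegral.integral_add_adjacent_intervals
    (hf.intervalIntegrable 0 (1 / 2)) (hf.intervalIntegrable (1 / 2) 1)]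
  field_simp
  ring

lemma leftZero_zero_right (s : ℝ) : leftZero s 0 = (1 - s⁻¹) / 2 := by
  rw [leftZero]
  ring

lemma wShape_zero_half (hs₁ : 1 < s₁) (hs₂ : 1 < s₂) : wShape s₁ s₂ 0 (1 / 2) = 1 / 2 := by
  rw [wShape_of_mem_Icc_leftZero_half (by norm_num) (by linarith) (by linarith)
    ⟨(leftZero_lt_half (by norm_num) (by linarith)).le, le_rfl⟩, mul_sub,
    mul_leftZero (by linarith : s₁ ≠ 0)]
  ring

lemma integral_zero_half_comp_wShape (hs₁ : 1 < s₁) (hs₂ : 1 < s₂) (hf : Continuous f) :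
    ∫ x in 0..1 / 2, f (wShape s₁ s₂ 0 x)
      = (1 - s₁⁻¹) / 2 * (∫ x in 0..1, f x) + s₁⁻¹ * ∫ x in 0..1 / 2, f x := by
  rw [integral_comp_wShape_of_mem_Icc_leftZero_half (by norm_num) (by linarith) (by linarith) hf
    ⟨(leftZero_lt_half (by norm_num) (by linarith)).le, le_rfl⟩, wShape_zero_half hs₁ hs₂,
    leftZero_zero_right]

lemma integral_zero_one_comp_wShape (hs₁ : 1 < s₁) (hs₂ : 1 < s₂) (hf : Continuous f) :
    ∫ x in 0..1, f (wShape s₁ s₂ 0 x)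
      = (1 - (s₁⁻¹ + s₂⁻¹) / 2) * (∫ x in 0..1, f x)
        + (s₁⁻¹ + s₂⁻¹) * ∫ x in 0..1 / 2, f x := by
  have hcont : Continuous fun x => f (wShape s₁ s₂ 0 x) := hf.comp (continuous_wShape s₁ s₂ 0)
  rw [← intervalIntegral.integral_add_adjacent_intervals (hcont.intervalIntegrable 0 (1 / 2))
    (hcont.intervalIntegrable (1 / 2) 1), integral_comp_wShape_eq_integral_comp_wShape_swap,
    show (1 : ℝ) - 1 / 2 = 1 / 2 by norm_num, integral_zero_half_comp_wShape hs₁ hs₂ hf,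
    integral_zero_half_comp_wShape hs₂ hs₁ hf]
  ring

theorem integral_comp_wShape_mul_h0 (hs₁ : 1 < s₁) (hs₂ : 1 < s₂) (hf : Continuous f) :
    ∫ x in Set.Icc 0 1, f (wShape s₁ s₂ 0 x) * h0 s₁ s₂ x
      = ∫ x in Set.Icc 0 1, f x * h0 s₁ s₂ x := by
  have hcont : Continuous fun x => f (wShape s₁ s₂ 0 x) := hf.comp (continuous_wShape s₁ s₂ 0)
  have hs₁0 : s₁ ≠ 0 := by linarith
  have hs₂0 : s₂ ≠ 0 := by linarith
  rw [integral_mul_h0 hs₁0 hs₂0 hcont, integral_mul_h0 hs₁0 hs₂0 hf,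
    integral_zero_half_comp_wShape hs₁ hs₂ hf, integral_zero_one_comp_wShape hs₁ hs₂ hf]
  ring

lemma integral_comp_wShape_iterate_mul_h0 (hs₁ : 1 < s₁) (hs₂ : 1 < s₂) (hf : Continuous f)
    (n : ℕ) :
    ∫ x in Set.Icc 0 1, f ((wShape s₁ s₂ 0)^[n] x) * h0 s₁ s₂ x
      = ∫ x in Set.Icc 0 1, f x * h0 s₁ s₂ x := by
  induction n with
  | zero => rfl
  | succ n ih =>
    simp only [Function.iterate_succ, Function.comp_apply]
    exact (integral_comp_wShape_mul_h0 hs₁ hs₂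
      (hf.comp ((continuous_wShape s₁ s₂ 0).iterate n))).trans ih

lemma integral_mul_h0_eq_zero_iff (hs₁ : 1 < s₁) (hs₂ : 1 < s₂) (hf : Continuous f) :
    ∫ x in Set.Icc 0 1, f x * h0 s₁ s₂ x = 0 ↔
      (s₁⁻¹ + s₂⁻¹) * (∫ x in 0..1 / 2, f x) = -((1 - s₁⁻¹) * ∫ x in 0..1, f x) := by
  have hΔ : 2 * s₁ * s₂ + s₁ - s₂ ≠ 0 := by nlinarith
  have hs₁0 : s₁ ≠ 0 := by linarith
  have hs₂0 : s₂ ≠ 0 := by linarith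
  have hs : 2 * s₁ * s₂ ≠ 0 := by positivity
  rw [integral_mul_h0 hs₁0 hs₂0 hf, mul_eq_zero_iff_left (div_ne_zero hs hΔ),
    eq_neg_iff_add_eq_zero]

lemma integral_zero_one_comp_wShape_of_mean_eq_zero (hs₁ : 1 < s₁) (hs₂ : 1 < s₂)
    (hf : Continuous f) (hmean : ∫ x in Set.Icc 0 1, f x * h0 s₁ s₂ x = 0) :
    ∫ x in 0..1, f (wShape s₁ s₂ 0 x) = (s₁⁻¹ - s₂⁻¹) / 2 * ∫ x in 0..1, f x := by
  rw [integral_zero_one_comp_wShape hs₁ hs₂ hf, (integral_mul_h0_eq_zero_iff hs₁ hs₂ hf).1 hmean]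
  ring

-- For `x` in the right half the primitive is `∫₀¹ - ∫ₓ¹`; mean zero makes its constant term the
-- opposite of that on the left half.
lemma abs_integral_comp_wShape_le_of_mean_eq_zero (hs₁ : 1 < s₁) (hs₂ : 1 < s₂)
    (hf : Continuous f) (hmean : ∫ x in Set.Icc 0 1, f x * h0 s₁ s₂ x = 0) (hκ : 1 / 2 ≤ κ)
    (hκ₁ : s₁⁻¹ ≤ κ) (hκ₂ : s₂⁻¹ ≤ κ) {x : ℝ} (hx : x ∈ Set.Icc 0 1) :
    |∫ y in 0..x, f (wShape s₁ s₂ 0 y)|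
      ≤ |∫ y in 0..1, f y| / 2 + κ * |∫ y in 0..wShape s₁ s₂ 0 x, f y| := by
  have hcont : Continuous fun y => f (wShape s₁ s₂ 0 y) := hf.comp (continuous_wShape s₁ s₂ 0)
  have hconst : |leftZero s₁ 0 * ∫ y in 0..1, f y| ≤ |∫ y in 0..1, f y| / 2 := by
    rw [abs_mul, abs_of_pos (leftZero_pos (by norm_num) (by linarith)), div_eq_inv_mul]
    gcongr
    linarith [leftZero_lt_half (S := s₁) (e := 0) (by norm_num) (by linarith)]
  rcases le_total x (1 / 2) with hle | hge
  · have hleft := abs_integral_comp_wShape_sub_le (by norm_num) (by linarith) (by linarith)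
      (S := s₁) (T := s₂) (e := 0) hf hκ hκ₁ ⟨hx.1, hle⟩
    linarith [abs_sub_abs_le_abs_sub (∫ y in 0..x, f (wShape s₁ s₂ 0 y))
      (leftZero s₁ 0 * ∫ y in 0..1, f y)]
  · have hright := abs_integral_comp_wShape_sub_le (by norm_num) (by linarith) (by linarith)
      (S := s₂) (T := s₁) (e := 0) (x := 1 - x) hf hκ hκ₂ ⟨by linarith [hx.2], by linarith⟩
    rw [← integral_comp_wShape_eq_integral_comp_wShape_swap, wShape_one_sub] at hright
    have hsplit : ∫ y in 0..x, f (wShape s₁ s₂ 0 y)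
        = -((∫ y in x..1, f (wShape s₁ s₂ 0 y)) - leftZero s₂ 0 * ∫ y in 0..1, f y)
          - leftZero s₁ 0 * ∫ y in 0..1, f y := by
      have hadd := intervalIntegral.integral_add_adjacent_intervals
        (hcont.intervalIntegrable (μ := volume) 0 x) (hcont.intervalIntegrable x 1)
      rw [integral_zero_one_comp_wShape_of_mean_eq_zero hs₁ hs₂ hf hmean] at hadd
      rw [leftZero_zero_right, leftZero_zero_right]
      linear_combination hadd
    rw [hsplit]
    refine (abs_sub _ _).trans ?_
    rw [abs_neg]
    linarith

lemma abs_integral_comp_wShape_le_mul (hs₁ : 1 < s₁) (hs₂ : 1 < s₂)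
    (hf : Continuous f) (hmean : ∫ x in Set.Icc 0 1, f x * h0 s₁ s₂ x = 0) (hκ : 1 / 2 ≤ κ)
    (hκ₁ : s₁⁻¹ ≤ κ) (hκ₂ : s₂⁻¹ ≤ κ) (htotal : |∫ y in 0..1, f y| ≤ (1 - κ) * B)
    (hB : ∀ x ∈ Set.Icc (0 : ℝ) 1, |∫ y in 0..x, f y| ≤ B) :
    |∫ y in 0..1, f (wShape s₁ s₂ 0 y)| ≤ (1 - κ) * ((1 + κ) / 2 * B) ∧
      ∀ x ∈ Set.Icc (0 : ℝ) 1, |∫ y in 0..x, f (wShape s₁ s₂ 0 y)| ≤ (1 + κ) / 2 * B := by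
  constructor
  · have hhalf : |(s₁⁻¹ - s₂⁻¹) / 2| ≤ (1 + κ) / 2 := by
      have h₁ : 0 < s₁⁻¹ := by positivity
      have h₂ : 0 < s₂⁻¹ := by positivity
      exact abs_le.2 ⟨by linarith, by linarith⟩
    rw [integral_zero_one_comp_wShape_of_mean_eq_zero hs₁ hs₂ hf hmean, abs_mul, mul_left_comm]
    gcongr
  · intro x hx
    have hWx := hB _ (mapsTo_wShape (S := s₁) (T := s₂) (e := 0) (by norm_num) (by norm_num)
      (by linarith) (by linarith) hx)
    calc |∫ y in 0..x, f (wShape s₁ s₂ 0 y)|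
        ≤ |∫ y in 0..1, f y| / 2 + κ * |∫ y in 0..wShape s₁ s₂ 0 x, f y| :=
          abs_integral_comp_wShape_le_of_mean_eq_zero hs₁ hs₂ hf hmean hκ hκ₁ hκ₂ hx
      _ ≤ (1 - κ) * B / 2 + κ * B := by gcongr
      _ = (1 + κ) / 2 * B := by ring

theorem exists_abs_integral_comp_wShape_iterate_le (hs₁ : 1 < s₁) (hs₂ : 1 < s₂)
    (hf : Continuous f) (hmean : ∫ x in Set.Icc 0 1, f x * h0 s₁ s₂ x = 0) :
    ∃ ρ D : ℝ, 0 ≤ ρ ∧ ρ < 1 ∧ ∀ n : ℕ, ∀ x ∈ Set.Icc (0 : ℝ) 1,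
      |∫ y in 0..x, f ((wShape s₁ s₂ 0)^[n] y)| ≤ ρ ^ n * D := by
  set W : ℝ → ℝ := wShape s₁ s₂ 0
  obtain ⟨κ, hκ, hκ₁, hκ₂, hκlt⟩ : ∃ κ : ℝ, 1 / 2 ≤ κ ∧ s₁⁻¹ ≤ κ ∧ s₂⁻¹ ≤ κ ∧ κ < 1 :=
    ⟨max (1 / 2) (max s₁⁻¹ s₂⁻¹), le_max_left _ _, by simp, by simp, max_lt (by norm_num)
      (max_lt (inv_lt_one_of_one_lt₀ hs₁) (inv_lt_one_of_one_lt₀ hs₂))⟩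
  obtain ⟨M, hM⟩ := isCompact_Icc.exists_bound_of_continuousOn (s := Set.Icc (0 : ℝ) 1)
    (intervalIntegral.continuous_primitive (μ := volume) hf.intervalIntegrable 0).continuousOn
  have hM0 : 0 ≤ M := (norm_nonneg _).trans (hM 0 (by simp))
  have hMD : M ≤ M / (1 - κ) := le_div_self hM0 (by linarith) (by linarith)
  have hdecay (n : ℕ) :
      |∫ y in 0..1, f (W^[n] y)| ≤ (1 - κ) * (((1 + κ) / 2) ^ n * (M / (1 - κ))) ∧
      ∀ x ∈ Set.Icc (0 : ℝ) 1, |∫ y in 0..x, f (W^[n] y)| ≤ ((1 + κ) / 2) ^ n * (M / (1 - κ)) := by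
    induction n with
    | zero =>
      refine ⟨?_, fun x hx => ?_⟩
      · simpa [mul_div_cancel₀ M (by linarith : 1 - κ ≠ 0)] using hM 1 (by simp)
      · simpa using (hM x hx).trans hMD
    | succ n ih =>
      simp only [Function.iterate_succ, Function.comp_apply, pow_succ', mul_assoc]
      exact abs_integral_comp_wShape_le_mul hs₁ hs₂
        (hf.comp ((continuous_wShape s₁ s₂ 0).iterate n))
        ((integral_comp_wShape_iterate_mul_h0 hs₁ hs₂ hf n).trans hmean) hκ hκ₁ hκ₂ ih.1 ih.2
  exact ⟨(1 + κ) / 2, M / (1 - κ), by linarith, by linarith, fun n => (hdecay n).2⟩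

end LimitMap

/-! ### Stability of acims -/

lemma integralBoundOn_indicator_Ioc {f : ℝ → ℝ} {a b E : ℝ} (hf : Continuous f) (hab : a ≤ b)
    (hE : ∀ x ∈ Set.Icc a b, |∫ y in a..x, f y| ≤ E) :
    IntegralBoundOn ((Set.Ioc a b).indicator f) Set.univ (2 * E) 0 := by
  intro u v huv _
  rw [zero_mul, add_zero, intervalIntegral.integral_of_le huv,
    setIntegral_indicator measurableSet_Ioc, Set.Ioc_inter_Ioc]
  rcases le_total (max u a) (min v b) with hle | hge
  · rw [← intervalIntegral.integral_of_le hle, ← intervalIntegral.integral_interval_sub_left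
      (hf.intervalIntegrable a _) (hf.intervalIntegrable a _)]
    have hleft := hE (max u a) ⟨le_max_right _ _, hle.trans (min_le_right _ _)⟩
    have hright := hE (min v b) ⟨(le_max_right _ _).trans hle, min_le_right _ _⟩
    exact (abs_sub _ _).trans (by linarith)
  · have hE0 : 0 ≤ E := (abs_nonneg _).trans (hE a (Set.left_mem_Icc.2 hab))
    simpa [Set.Ioc_eq_empty (not_lt.2 hge)] using hE0

/-- `ν` is an absolutely continuous invariant probability measure (acim) of `W` carried by the
set `K`. The map is defined on all of `ℝ`, so the support condition stands for restricting it
to `K`. -/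
structure IsAcimOn (K : Set ℝ) (W : ℝ → ℝ) (ν : Measure ℝ) : Prop where
  isProbabilityMeasure : IsProbabilityMeasure ν
  absolutelyContinuous : ν ≪ volume
  measure_compl : ν Kᶜ = 0
  measurePreserving : MeasurePreserving W ν ν

namespace IsAcimOn

variable {K : Set ℝ} {W φ : ℝ → ℝ} {ν : Measure ℝ}

lemma of_measure_preimage (hprob : IsProbabilityMeasure ν) (hac : ν ≪ volume) (hK : ν Kᶜ = 0)
    (hW : Measurable W) (hinv : ∀ A : Set ℝ, MeasurableSet A → ν (W ⁻¹' A) = ν A) :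
    IsAcimOn K W ν :=
  ⟨hprob, hac, hK, hW, Measure.ext fun A hA => by rw [Measure.map_apply hW hA, hinv A hA]⟩

lemma ae_mem (hν : IsAcimOn K W ν) : ∀ᵐ x ∂ν, x ∈ K := hν.measure_compl

lemma integrable (hν : IsAcimOn K W ν) (hK : IsCompact K) (hφ : Continuous φ) :
    Integrable φ ν := by
  have := hν.isProbabilityMeasure
  obtain ⟨C, hC⟩ := hK.exists_bound_of_continuousOn hφ.continuousOn
  exact .of_bound hφ.aestronglyMeasurable C (hν.ae_mem.mono hC)

lemma abs_integral_le_of_abs_primitive_le {a b θ C E : ℝ} (hν : IsAcimOn (Set.Icc a b) W ν)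
    (hab : a ≤ b) (hW : DualLasotaYorke W θ C) (hθ : 0 ≤ θ) (hθ1 : θ < 1) (hC : 0 ≤ C)
    (hφ : Continuous φ) (hE : ∀ x ∈ Set.Icc a b, |∫ y in a..x, φ y| ≤ E) :
    |∫ x, φ x ∂ν| ≤ C * (2 * E) * (1 - θ)⁻¹ := by
  have := hν.isProbabilityMeasure
  obtain ⟨M, hM⟩ := isCompact_Icc.exists_bound_of_continuousOn (s := Set.Icc a b) hφ.continuousOn
  have hbound (x : ℝ) : |(Set.Ioc a b).indicator φ x| ≤ M := by
    rw [← Real.norm_eq_abs, norm_indicator_eq_indicator_norm]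
    refine Set.indicator_apply_le' (fun hx => hM x (Set.Ioc_subset_Icc_self hx)) fun _ => ?_
    exact (norm_nonneg _).trans (hM a (Set.left_mem_Icc.2 hab))
  have hclip : φ =ᵐ[ν] (Set.Ioc a b).indicator φ := by
    have hne : ∀ᵐ x ∂ν, x ≠ a := hν.absolutelyContinuous.ae_le (Measure.ae_ne volume a)
    filter_upwards [hν.ae_mem, hne] with x hx hxa
    have hx' : x ∈ Set.Ioc a b := ⟨lt_of_le_of_ne hx.1 hxa.symm, hx.2⟩
    rw [Set.indicator_of_mem hx']
  rw [integral_congr_ae hclip]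
  exact hW.abs_integral_le hθ hθ1 hC hν.absolutelyContinuous hν.measurePreserving
    (hφ.measurable.indicator measurableSet_Ioc) hbound (integralBoundOn_indicator_Ioc hφ hab hE)

end IsAcimOn

section Stability

variable {ι : Type*} {l : Filter ι} {K : Set ℝ} {W : ι → ℝ → ℝ} {W₀ φ : ℝ → ℝ}
  {μ : ι → Measure ℝ}

lemma tendsto_integral_comp_sub_integral (hK : IsCompact K)
    (hμ : ∀ᶠ i in l, IsAcimOn K (W i) (μ i)) (hW₀ : Continuous W₀) (hφ : Continuous φ)
    (hunif : TendstoUniformlyOn (fun i x => φ (W i x)) (fun x => φ (W₀ x)) l K) :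
    Tendsto (fun i => (∫ x, φ (W₀ x) ∂μ i) - ∫ x, φ x ∂μ i) l (𝓝 0) := by
  rw [Metric.tendsto_nhds]
  intro ε hε
  filter_upwards [hμ, Metric.tendstoUniformlyOn_iff.1 hunif (ε / 2) (half_pos hε)] with i hi hclose
  have := hi.isProbabilityMeasure
  have hint : Integrable (fun x => φ (W i x)) (μ i) :=
    hi.measurePreserving.integrable_comp_of_integrable (hi.integrable hK hφ)
  have hint₀ : Integrable (fun x => φ (W₀ x)) (μ i) := hi.integrable hK (hφ.comp hW₀)
  rw [dist_zero_right, ← integral_comp_of_measurePreserving hi.measurePreserving hφ.measurable,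
    ← integral_sub hint₀ hint]
  calc ‖∫ x, φ (W₀ x) - φ (W i x) ∂μ i‖ ≤ ε / 2 * (μ i).real Set.univ :=
        norm_integral_le_of_norm_le_const (hi.ae_mem.mono fun x hx => (hclose x hx).le)
    _ < ε := by rw [probReal_univ, mul_one]; exact half_lt_self hε

lemma tendsto_integral_comp_iterate_sub_integral (hK : IsCompact K)
    (hμ : ∀ᶠ i in l, IsAcimOn K (W i) (μ i)) (hW₀ : Continuous W₀)
    (hunif : ∀ ψ : ℝ → ℝ, Continuous ψ →
      TendstoUniformlyOn (fun i x => ψ (W i x)) (fun x => ψ (W₀ x)) l K)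
    (hφ : Continuous φ) (n : ℕ) :
    Tendsto (fun i => (∫ x, φ (W₀^[n] x) ∂μ i) - ∫ x, φ x ∂μ i) l (𝓝 0) := by
  induction n with
  | zero => simpa using tendsto_const_nhds
  | succ n ih =>
    have hcont : Continuous fun x => φ (W₀^[n] x) := hφ.comp (hW₀.iterate n)
    have hstep := tendsto_integral_comp_sub_integral hK hμ hW₀ hcont (hunif _ hcont)
    simpa [Function.iterate_succ] using hstep.add ih

theorem tendsto_integral_zero_of_abs_integral_comp_iterate_le (hK : IsCompact K)
    (hμ : ∀ᶠ i in l, IsAcimOn K (W i) (μ i)) (hW₀ : Continuous W₀)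
    (hunif : ∀ ψ : ℝ → ℝ, Continuous ψ →
      TendstoUniformlyOn (fun i x => ψ (W i x)) (fun x => ψ (W₀ x)) l K)
    (hφ : Continuous φ) {b : ℕ → ℝ} (hb : Tendsto b atTop (𝓝 0))
    (hbound : ∀ n, ∀ᶠ i in l, |∫ x, φ (W₀^[n] x) ∂μ i| ≤ b n) :
    Tendsto (fun i => ∫ x, φ x ∂μ i) l (𝓝 0) := by
  rw [Metric.tendsto_nhds]
  intro ε hε
  obtain ⟨n, hn⟩ := (hb.eventually_lt_const (half_pos hε)).exists
  have hiterate := tendsto_integral_comp_iterate_sub_integral hK hμ hW₀ hunif hφ n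
  filter_upwards [hbound n, Metric.tendsto_nhds.1 hiterate (ε / 2) (half_pos hε)] with i hi hdist
  rw [dist_zero_right, Real.norm_eq_abs, abs_sub_comm] at hdist
  rw [dist_zero_right, Real.norm_eq_abs]
  linarith [abs_sub_abs_le_abs_sub (∫ x, φ x ∂μ i) (∫ x, φ (W₀^[n] x) ∂μ i)]

end Stability

section Perturbation

variable {ι : Type*} {l : Filter ι} {S T e : ι → ℝ} {s s₁ s₂ : ℝ}

lemma tendsto_leftZero {e₀ : ℝ} (hs : s ≠ 0) (hS : Tendsto S l (𝓝 s)) (he : Tendsto e l (𝓝 e₀)) :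
    Tendsto (fun i => leftZero (S i) (e i)) l (𝓝 (leftZero s e₀)) :=
  ((he.const_add _).div hS hs).const_sub _

lemma continuousAt_wShape {e₀ : ℝ} (he₀ : -(1 / 2) < e₀) (hs₁ : 1 + 2 * e₀ < s₁)
    (hs₂ : 1 + 2 * e₀ < s₂) (x : ℝ) :
    ContinuousAt (fun z : (ℝ × ℝ × ℝ) × ℝ => wShape z.1.1 z.1.2.1 z.1.2.2 z.2)
      ((s₁, s₂, e₀), x) := by
  have hk₁ : ContinuousAt (fun z : (ℝ × ℝ × ℝ) × ℝ => leftZero z.1.1 z.1.2.2) ((s₁, s₂, e₀), x) :=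
    tendsto_leftZero (by linarith) (Continuous.continuousAt (by fun_prop))
      (Continuous.continuousAt (by fun_prop))
  have hk₂ : ContinuousAt (fun z : (ℝ × ℝ × ℝ) × ℝ => leftZero z.1.2.1 z.1.2.2)
      ((s₁, s₂, e₀), x) :=
    tendsto_leftZero (by linarith) (Continuous.continuousAt (by fun_prop))
      (Continuous.continuousAt (by fun_prop))
  have hk₁0 : leftZero s₁ e₀ ≠ 0 := (leftZero_pos he₀ hs₁).ne'
  have hk₂0 : leftZero s₂ e₀ ≠ 0 := (leftZero_pos he₀ hs₂).ne'
  unfold wShape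
  fun_prop (disch := assumption)

lemma tendstoUniformlyOn_comp_wShape {e₀ : ℝ} (he₀ : -(1 / 2) < e₀) (hs₁ : 1 + 2 * e₀ < s₁)
    (hs₂ : 1 + 2 * e₀ < s₂) (hS : Tendsto S l (𝓝 s₁)) (hT : Tendsto T l (𝓝 s₂))
    (he : Tendsto e l (𝓝 e₀)) {K : Set ℝ} (hK : IsCompact K) {φ : ℝ → ℝ} (hφ : Continuous φ) :
    TendstoUniformlyOn (fun i x => φ (wShape (S i) (T i) (e i) x))
      (fun x => φ (wShape s₁ s₂ e₀ x)) l K := by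
  rw [Metric.tendstoUniformlyOn_iff]
  intro ε hε
  refine (hS.prodMk_nhds (hT.prodMk_nhds he)).eventually
    (hK.eventually_forall_of_forall_eventually (P := fun (z : ℝ × ℝ × ℝ) x =>
      dist (φ (wShape s₁ s₂ e₀ x)) (φ (wShape z.1 z.2.1 z.2.2 x)) < ε) fun x _ => ?_)
  have hlimit : Continuous fun z : (ℝ × ℝ × ℝ) × ℝ => φ (wShape s₁ s₂ e₀ z.2) :=
    hφ.comp ((continuous_wShape s₁ s₂ e₀).comp continuous_snd)
  have hdist := hlimit.continuousAt.dist
    (hφ.continuousAt.comp (continuousAt_wShape he₀ hs₁ hs₂ x))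
  exact hdist.eventually_lt_const (by simpa using hε)

lemma eventually_one_add_two_mul_lt (hs : 1 < s) (hS : Tendsto S l (𝓝 s))
    (he : Tendsto e l (𝓝 0)) : ∀ᶠ i in l, 1 + 2 * e i < S i :=
  ((he.const_mul 2).const_add 1).eventually_lt hS (by simpa using hs)

lemma exists_eventually_dualLasotaYorke_wShape (hs₁ : 1 < s₁) (hs₂ : 1 < s₂)
    (hsum : s₁⁻¹ + s₂⁻¹ < 1) (hS : Tendsto S l (𝓝 s₁)) (hT : Tendsto T l (𝓝 s₂))
    (he : Tendsto e l (𝓝 0)) :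
    ∃ θ C : ℝ, 0 ≤ θ ∧ θ < 1 ∧ 0 ≤ C ∧
      ∀ᶠ i in l, DualLasotaYorke (wShape (S i) (T i) (e i)) θ C := by
  have hs₁0 : s₁ ≠ 0 := by linarith
  have hs₂0 : s₂ ≠ 0 := by linarith
  have houter {s : ℝ} (hs : 1 < s) : leftZero s 0 + s⁻¹ < 1 := by
    rw [leftZero_zero_right]
    linarith [inv_lt_one_of_one_lt₀ hs]
  have hhalf {s : ℝ} (hs : 1 < s) : leftZero s 0 < 1 / 2 :=
    leftZero_lt_half (by norm_num) (by linarith)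
  obtain ⟨θ, hθ, hθ1⟩ := exists_between
    (max_lt hsum (max_lt (houter hs₁) (houter hs₂)))
  rw [max_lt_iff, max_lt_iff] at hθ
  obtain ⟨k, hk, hk_half⟩ := exists_between (max_lt (hhalf hs₁) (hhalf hs₂))
  rw [max_lt_iff] at hk
  have hθ0 : 0 ≤ θ := (by positivity : 0 ≤ s₁⁻¹ + s₂⁻¹).trans hθ.1.le
  have hkS := tendsto_leftZero hs₁0 hS he
  have hkT := tendsto_leftZero hs₂0 hT he
  refine ⟨θ, θ / (1 / 2 - k), hθ0, hθ1, div_nonneg hθ0 (by linarith), ?_⟩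
  filter_upwards [he.eventually_const_lt (by norm_num : -(1 / 2) < (0 : ℝ)),
    eventually_one_add_two_mul_lt hs₁ hS he, eventually_one_add_two_mul_lt hs₂ hT he,
    (hkS.add (hS.inv₀ hs₁0)).eventually_lt_const hθ.2.1,
    (hkT.add (hT.inv₀ hs₂0)).eventually_lt_const hθ.2.2,
    ((hS.inv₀ hs₁0).add (hT.inv₀ hs₂0)).eventually_lt_const hθ.1,
    hkS.eventually_lt_const hk.1, hkT.eventually_lt_const hk.2]
    with i hei hSi hTi hθS hθT hθST hkSi hkTi
  exact dualLasotaYorke_wShape hei hSi hTi hθS.le hθT.le hθST.le (by linarith) (by linarith)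
    (by linarith)

lemma integral_sub_const_mul_h0 (hs₁ : 1 < s₁) (hs₂ : 1 < s₂) {g : ℝ → ℝ} (hg : Continuous g)
    (c : ℝ) :
    ∫ x in Set.Icc 0 1, (g x - c) * h0 s₁ s₂ x
      = (∫ x in Set.Icc 0 1, g x * h0 s₁ s₂ x) - c := by
  have hΔ : 2 * s₁ * s₂ + s₁ - s₂ ≠ 0 := by nlinarith
  have hs₁0 : s₁ ≠ 0 := by linarith
  have hs₂0 : s₂ ≠ 0 := by linarith
  have hint (u v : ℝ) : ∫ x in u..v, (g x - c) = (∫ x in u..v, g x) - (v - u) * c := by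
    rw [intervalIntegral.integral_sub (hg.intervalIntegrable _ _) intervalIntegrable_const,
      intervalIntegral.integral_const, smul_eq_mul]
  have hone : 2 * s₁ * s₂ / (2 * s₁ * s₂ + s₁ - s₂)
      * ((s₁⁻¹ + s₂⁻¹) * (1 / 2) + (1 - s₁⁻¹)) = 1 := by
    rw [div_mul_eq_mul_div, div_eq_one_iff_eq hΔ]
    field_simp
    ring
  rw [integral_mul_h0 hs₁0 hs₂0 (by fun_prop), integral_mul_h0 hs₁0 hs₂0 hg, hint, hint]
  linear_combination (-c) * hone

theorem tendsto_integral_of_isAcimOn_wShape (hs₁ : 1 < s₁) (hs₂ : 1 < s₂)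
    (hsum : s₁⁻¹ + s₂⁻¹ < 1) (hS : Tendsto S l (𝓝 s₁)) (hT : Tendsto T l (𝓝 s₂))
    (he : Tendsto e l (𝓝 0)) {μ : ι → Measure ℝ}
    (hμ : ∀ᶠ i in l, IsAcimOn (Set.Icc 0 1) (wShape (S i) (T i) (e i)) (μ i))
    {g : ℝ → ℝ} (hg : Continuous g) :
    Tendsto (fun i => ∫ x, g x ∂μ i) l (𝓝 (∫ x in Set.Icc 0 1, g x * h0 s₁ s₂ x)) := by
  set G : ℝ := ∫ x in Set.Icc 0 1, g x * h0 s₁ s₂ x with hG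
  have hf : Continuous fun x => g x - G := hg.sub continuous_const
  have hmean : ∫ x in Set.Icc 0 1, (g x - G) * h0 s₁ s₂ x = 0 := by
    rw [integral_sub_const_mul_h0 hs₁ hs₂ hg, ← hG, sub_self]
  obtain ⟨ρ, D, hρ, hρ1, hdecay⟩ := exists_abs_integral_comp_wShape_iterate_le hs₁ hs₂ hf hmean
  obtain ⟨θ, C, hθ, hθ1, hC, hLY⟩ := exists_eventually_dualLasotaYorke_wShape hs₁ hs₂ hsum hS hT he
  have hbound (n : ℕ) : ∀ᶠ i in l,
      |∫ x, (g ((wShape s₁ s₂ 0)^[n] x) - G) ∂μ i| ≤ C * (2 * (ρ ^ n * D)) * (1 - θ)⁻¹ := by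
    filter_upwards [hμ, hLY] with i hi hLYi
    exact hi.abs_integral_le_of_abs_primitive_le zero_le_one hLYi hθ hθ1 hC
      (hf.comp ((continuous_wShape s₁ s₂ 0).iterate n)) (hdecay n)
  have hlim : Tendsto (fun n => C * (2 * (ρ ^ n * D)) * (1 - θ)⁻¹) atTop (𝓝 0) := by
    simpa using ((((tendsto_pow_atTop_nhds_zero_of_lt_one hρ hρ1).mul_const D).const_mul
      2).const_mul C).mul_const (1 - θ)⁻¹
  have hzero := tendsto_integral_zero_of_abs_integral_comp_iterate_le isCompact_Icc hμ
    (continuous_wShape s₁ s₂ 0) (fun ψ hψ => tendstoUniformlyOn_comp_wShape (by norm_num)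
      (by linarith) (by linarith) hS hT he isCompact_Icc hψ) hf hlim hbound
  rw [← tendsto_sub_nhds_zero_iff]
  refine hzero.congr' (hμ.mono fun i hi => ?_)
  have := hi.isProbabilityMeasure
  rw [integral_sub (hi.integrable isCompact_Icc hg) (integrable_const G)]
  simp

end Perturbation

section Family

variable {s₁ s₂ p q r : ℝ}

lemma measurable_Wmap (s₁ s₂ p q r a : ℝ) : Measurable (Wmap s₁ s₂ p q r a) := by
  unfold Wmap
  exact .ite measurableSet_Iio (by fun_prop) (.ite measurableSet_Iio (by fun_prop)
    (.ite measurableSet_Iio (by fun_prop) (by fun_prop)))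

lemma tendsto_add_mul_of_le_nhds_zero {l : Filter ℝ} (hl : l ≤ 𝓝 0) (s p : ℝ) :
    Tendsto (fun a => s + p * a) l (𝓝 s) :=
  ((by fun_prop : Continuous fun a => s + p * a).tendsto' 0 s (by simp)).mono_left hl

theorem Wmap_acim_tendsto_acim_limit_general (hs₁ : 1 < s₁) (hs₂ : 1 < s₂)
    (hsum : s₁⁻¹ + s₂⁻¹ < 1) {l : Filter ℝ} (hl : l ≤ 𝓝 0) {μ : ℝ → Measure ℝ}
    (hμ : ∀ᶠ a in l, IsAcimOn (Set.Icc 0 1) (Wmap s₁ s₂ p q r a) (μ a))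
    {g : ℝ → ℝ} (hg : Continuous g) :
    Tendsto (fun a => ∫ x, g x ∂μ a) l (𝓝 (∫ x in Set.Icc 0 1, g x * h0 s₁ s₂ x)) := by
  have hS := tendsto_add_mul_of_le_nhds_zero hl s₁ p
  have hT := tendsto_add_mul_of_le_nhds_zero hl s₂ q
  have he : Tendsto (fun a => r * a) l (𝓝 0) := by
    simpa using tendsto_add_mul_of_le_nhds_zero hl 0 r
  refine tendsto_integral_of_isAcimOn_wShape hs₁ hs₂ hsum hS hT he ?_ hg
  filter_upwards [hμ, he.eventually_const_lt (by norm_num : -(1 / 2) < (0 : ℝ)),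
    eventually_one_add_two_mul_lt hs₁ hS he, eventually_one_add_two_mul_lt hs₂ hT he]
    with a hμa hea hSa hTa
  rwa [← Wmap_eq_wShape hea hSa hTa]

end Family

/-- Theorem 1(III): if `1/s₁ + 1/s₂ < 1`, the acim's `μ_a` of `W_a` converge *-weakly, as
`a → 0⁺`, to the acim `μ₀` of `W₀`, whose density is `h0`. -/
theorem Wmap_acim_tendsto_acim_limit
    (s₁ s₂ p q r : ℝ) (hs₁ : 1 < s₁) (hs₂ : 1 < s₂)
    (hp : 0 < p) (hq : 0 < q) (hr : 0 < r)
    (hsum : 1/s₁ + 1/s₂ < 1)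
    (a₁ : ℝ) (ha₁ : 0 < a₁) (μ : ℝ → Measure ℝ)
    (hμ : ∀ a, 0 < a → a < a₁ →
      Set.MapsTo (Wmap s₁ s₂ p q r a) (Set.Icc 0 1) (Set.Icc 0 1) ∧
      IsProbabilityMeasure (μ a) ∧
      μ a ≪ volume ∧
      μ a (Set.Icc (0:ℝ) 1)ᶜ = 0 ∧
      (∀ A : Set ℝ, MeasurableSet A → μ a (Wmap s₁ s₂ p q r a ⁻¹' A) = μ a A)) :
    ∀ g : ℝ → ℝ, Continuous g →
      Tendsto (fun a => ∫ x, g x ∂(μ a)) (𝓝[>] (0:ℝ))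
        (𝓝 (∫ x in Set.Icc (0:ℝ) 1, g x * h0 s₁ s₂ x)) := by
  have hacim : ∀ᶠ a in 𝓝[>] 0, IsAcimOn (Set.Icc 0 1) (Wmap s₁ s₂ p q r a) (μ a) := by
    filter_upwards [Ioo_mem_nhdsGT ha₁] with a ⟨ha, haa₁⟩
    obtain ⟨-, hprob, hac, hsupp, hinv⟩ := hμ a ha haa₁
    exact .of_measure_preimage hprob hac hsupp (measurable_Wmap s₁ s₂ p q r a) hinv
  exact fun g hg => Wmap_acim_tendsto_acim_limit_general hs₁ hs₂ (by simpa using hsum)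
    nhdsWithin_le_nhds hacim hg
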